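/- (TW transformation on a tree.) Let V be a finite vertex type, T a simple graph on V that is a tree (connected and acyclic), with edge-weight function w : Sym2 V → ℝ, and let x, y, z be distinct vertices such that T.Adj x y, T.Adj y z, and w({x,y}) ≥ w({y,z}). Let T' be the graph obtained from T by deleting the edge {x,y} and adding the edge {x,z}, with weight function w' agreeing with w on all edges except that w'({x,z}) = w({x,y}). Then: (1) T' is a tree on V; and (2) for all vertices u and v, PathMax_{T'}(u,v) = PathMax_T(u,v), i.e., the maximum edge weight on the unique path in T' from u to v equals the maximum edge weight on the unique path in T from u to v. -/

import Mathlib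

/-- The maximum edge weight on a walk `p` (as the supremum of the weights of
its edges). -/
noncomputable def walkMax {V : Type*} {G : SimpleGraph V} (w : Sym2 V → ℝ)
    {u v : V} (p : G.Walk u v) : ℝ :=
  sSup (w '' {e | e ∈ p.edges})

/-- `pathMax G w u v` is the minimum, over all paths `P` from `u` to `v` in
`G`, of the maximum edge weight on `P`. -/
noncomputable def pathMax {V : Type*} (G : SimpleGraph V) (w : Sym2 V → ℝ)
    (u v : V) : ℝ :=
  sInf {m | ∃ p : G.Walk u v, p.IsPath ∧ m = walkMax w p}

/-!
The quantity `pathMax G w u v` is determined by the thresholds `c` for which `u` and `v` are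
joined in the sublevel graph of edges of weight at most `c`. Sliding the edge `{x, y}` along
`{y, z}` to `{x, z}` does not change the connected components. Below the threshold `w {x, y}` the
sublevel graphs do not see the slid edge; from it onwards they contain `{y, z}`, because
`w {y, z} ≤ w {x, y}`, so they are slid as well. Either way their components are unchanged.
In a forest `{x, y}` is a bridge, and deleting it leaves `y` and `z` adjacent, so `{x, z}` joins two
different components and creates no cycle.
-/

open SimpleGraph

lemma reachable_of_forall_adj_reachable {V : Type*} {G H : SimpleGraph V} {u v : V}
    (h : ∀ ⦃a b⦄, G.Adj a b → H.Reachable a b) (huv : G.Reachable u v) : H.Reachable u v :=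
  Relation.reflTransGen_le_of_equivalence_of_le H.reachable_is_equivalence h u v
    ((reachable_iff_reflTransGen u v).1 huv)

section SublevelGraph

variable {V α : Type*} [LE α]

/-- The sublevel graph of an edge weighting: the edges of `G` of weight at most `c`. -/
def sublevelGraph (G : SimpleGraph V) (w : Sym2 V → α) (c : α) : SimpleGraph V :=
  fromEdgeSet {e ∈ G.edgeSet | w e ≤ c}

lemma edgeSet_sublevelGraph (G : SimpleGraph V) (w : Sym2 V → α) (c : α) :
    (sublevelGraph G w c).edgeSet = {e ∈ G.edgeSet | w e ≤ c} := by
  rw [sublevelGraph, edgeSet_fromEdgeSet, sdiff_eq_left, Set.disjoint_left]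
  exact fun e he => G.not_isDiag_of_mem_edgeSet he.1

lemma sublevelGraph_adj {G : SimpleGraph V} {w : Sym2 V → α} {c : α} {a b : V} :
    (sublevelGraph G w c).Adj a b ↔ G.Adj a b ∧ w s(a, b) ≤ c := by
  rw [← mem_edgeSet, edgeSet_sublevelGraph, Set.mem_ofPred_eq, mem_edgeSet]

end SublevelGraph

section PathMax

variable {V : Type*} {G H : SimpleGraph V} {w w' : Sym2 V → ℝ} {c : ℝ} {u v : V}

lemma walkMax_le_iff {p : G.Walk u v} (hp : ¬p.Nil) :
    walkMax w p ≤ c ↔ ∀ e ∈ p.edges, w e ≤ c := by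
  have hbdd : BddAbove (w '' {e | e ∈ p.edges}) :=
    ((List.finite_toSet p.edges).image w).bddAbove
  have hne : (w '' {e | e ∈ p.edges}).Nonempty :=
    Set.Nonempty.image w (List.exists_mem_of_ne_nil _ (Walk.edges_eq_nil.not.2 hp))
  rw [walkMax, csSup_le_iff hbdd hne, Set.forall_mem_image]
  rfl

lemma exists_isPath_walkMax_le_iff (huv : u ≠ v) :
    (∃ p : G.Walk u v, p.IsPath ∧ walkMax w p ≤ c) ↔ (sublevelGraph G w c).Reachable u v := by
  constructor
  · rintro ⟨p, -, hp⟩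
    rw [walkMax_le_iff (Walk.not_nil_of_ne huv)] at hp
    refine (p.transfer (sublevelGraph G w c) fun e he => ?_).reachable
    rw [edgeSet_sublevelGraph]
    exact ⟨p.edges_subset_edgeSet he, hp e he⟩
  · intro h
    obtain ⟨p, hp⟩ := h.exists_isPath
    have hedges : ∀ e ∈ p.edges, e ∈ G.edgeSet ∧ w e ≤ c := fun e he => by
      simpa only [edgeSet_sublevelGraph, Set.mem_ofPred_eq] using p.edges_subset_edgeSet he
    refine ⟨p.transfer G fun e he => (hedges e he).1, hp.transfer _, ?_⟩
    rw [walkMax_le_iff (Walk.not_nil_of_ne huv), Walk.edges_transfer]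
    exact fun e he => (hedges e he).2

lemma pathMax_self (G : SimpleGraph V) (w : Sym2 V → ℝ) (u : V) : pathMax G w u u = 0 := by
  have hnil : {m | ∃ p : G.Walk u u, p.IsPath ∧ m = walkMax w p} = {0} := by
    ext m
    simp only [Walk.isPath_iff_nil, ← Walk.eq_nil_iff_nil, exists_eq_left]
    simp [walkMax]
  rw [pathMax, hnil, csInf_singleton]

lemma pathMax_eq_of_forall_reachable_sublevelGraph_iff
    (h : ∀ c, (sublevelGraph G w c).Reachable u v ↔ (sublevelGraph H w' c).Reachable u v) :
    pathMax G w u v = pathMax H w' u v := by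
  obtain rfl | huv := eq_or_ne u v
  · rw [pathMax_self, pathMax_self]
  simp only [← exists_isPath_walkMax_le_iff huv] at h
  apply csInf_eq_csInf_of_forall_exists_le
  · rintro _ ⟨p, hp, rfl⟩
    obtain ⟨q, hq, hqp⟩ := (h _).1 ⟨p, hp, le_rfl⟩
    exact ⟨_, ⟨q, hq, rfl⟩, hqp⟩
  · rintro _ ⟨q, hq, rfl⟩
    obtain ⟨p, hp, hpq⟩ := (h _).2 ⟨q, hq, le_rfl⟩
    exact ⟨_, ⟨p, hp, rfl⟩, hpq⟩

end PathMax

section SlideEdge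

variable {V : Type*} {G : SimpleGraph V} {x y z : V}

/-- The TW transformation of a graph: the edge `{x, y}` is replaced by `{x, z}`, its endpoint `y`
sliding to `z`. Adjacency of `x` to `y` and of `y` to `z` is not part of the definition. -/
def slideEdge (G : SimpleGraph V) (x y z : V) : SimpleGraph V :=
  fromEdgeSet ((G.edgeSet \ {s(x, y)}) ∪ {s(x, z)})

lemma slideEdge_eq_deleteEdges_sup_edge (G : SimpleGraph V) (x y z : V) :
    slideEdge G x y z = G.deleteEdges {s(x, y)} ⊔ edge x z := by
  rw [slideEdge, fromEdgeSet_union, fromEdgeSet_sdiff, fromEdgeSet_edgeSet, deleteEdges, edge]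

lemma slideEdge_adj {a b : V} :
    (slideEdge G x y z).Adj a b ↔
      (G.Adj a b ∧ s(a, b) ≠ s(x, y) ∨ s(a, b) = s(x, z)) ∧ a ≠ b :=
  fromEdgeSet_adj _

lemma deleteEdges_adj_of_adj_of_ne (hyz : G.Adj y z) (hxz : x ≠ z) :
    (G.deleteEdges {s(x, y)}).Adj y z :=
  deleteEdges_adj.2 ⟨hyz, by simp [hxz.symm, hyz.ne']⟩

lemma reachable_slideEdge_iff (hxy : G.Adj x y) (hyz : G.Adj y z) (hxz : x ≠ z) {u v : V} :
    (slideEdge G x y z).Reachable u v ↔ G.Reachable u v := by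
  rw [slideEdge_eq_deleteEdges_sup_edge]
  constructor <;> refine reachable_of_forall_adj_reachable fun a b hab => ?_
  · obtain hab | hab := hab
    · exact (deleteEdges_le _ hab).reachable
    · have hreach : G.Reachable x z := hxy.reachable.trans hyz.reachable
      obtain ⟨⟨rfl, rfl⟩ | ⟨rfl, rfl⟩, -⟩ := (edge_adj ..).1 hab
      exacts [hreach, hreach.symm]
  · by_cases he : s(a, b) = s(x, y)
    · have hzy := (deleteEdges_adj_of_adj_of_ne hyz hxz).symm
      have hxz' : (edge x z).Adj x z := (edge_adj ..).2 ⟨.inl ⟨rfl, rfl⟩, hxz⟩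
      have hreach : (G.deleteEdges {s(x, y)} ⊔ edge x z).Reachable x y :=
        (Adj.reachable (Or.inr hxz')).trans (Adj.reachable (Or.inl hzy))
      obtain ⟨rfl, rfl⟩ | ⟨rfl, rfl⟩ := Sym2.eq_iff.1 he
      exacts [hreach, hreach.symm]
    · exact Adj.reachable (Or.inl (deleteEdges_adj.2 ⟨hab, he⟩))

lemma isAcyclic_slideEdge (hG : G.IsAcyclic) (hxy : G.Adj x y) (hyz : G.Adj y z) (hxz : x ≠ z) :
    (slideEdge G x y z).IsAcyclic := by
  rw [slideEdge_eq_deleteEdges_sup_edge]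
  refine (hG.anti (deleteEdges_le _)).sup_edge_of_not_reachable fun hreach => ?_
  have hzy := (deleteEdges_adj_of_adj_of_ne hyz hxz).symm
  exact isBridge_iff.1 (isAcyclic_iff_forall_isBridge.1 hG hxy) (hreach.trans hzy.reachable)

lemma not_adj_of_isAcyclic_of_adj_adj (hG : G.IsAcyclic) (hxy : G.Adj x y) (hyz : G.Adj y z) :
    ¬G.Adj x z := by
  classical
  exact fun hxz => hG.cliqueFree le_rfl {x, y, z} (is3Clique_triple_iff.2 ⟨hxy, hxz, hyz⟩)

lemma sublevelGraph_slideEdge_of_le {α : Type*} [LE α] {w w' : Sym2 V → α} {c : α}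
    (hnew : w' s(x, z) = w s(x, y)) (hold : ∀ e ∈ G.edgeSet, w' e = w e) (hc : w s(x, y) ≤ c) :
    sublevelGraph (slideEdge G x y z) w' c = slideEdge (sublevelGraph G w c) x y z := by
  ext a b
  have hab := hold s(a, b)
  simp only [sublevelGraph_adj, slideEdge_adj, mem_edgeSet] at hab ⊢
  grind

lemma sublevelGraph_slideEdge_of_not_le {α : Type*} [LE α] {w w' : Sym2 V → α} {c : α}
    (hnew : w' s(x, z) = w s(x, y)) (hold : ∀ e ∈ G.edgeSet, w' e = w e) (hc : ¬w s(x, y) ≤ c) :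
    sublevelGraph (slideEdge G x y z) w' c = sublevelGraph G w c := by
  ext a b
  have hab := hold s(a, b)
  have hne := G.ne_of_adj (a := a) (b := b)
  simp only [sublevelGraph_adj, slideEdge_adj, mem_edgeSet] at hab ⊢
  grind

lemma reachable_sublevelGraph_slideEdge_iff {α : Type*} [Preorder α] {w w' : Sym2 V → α} {c : α}
    (hxy : G.Adj x y) (hyz : G.Adj y z) (hxz : x ≠ z) (hw : w s(y, z) ≤ w s(x, y))
    (hnew : w' s(x, z) = w s(x, y)) (hold : ∀ e ∈ G.edgeSet, w' e = w e) {u v : V} :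
    (sublevelGraph (slideEdge G x y z) w' c).Reachable u v ↔
      (sublevelGraph G w c).Reachable u v := by
  by_cases hc : w s(x, y) ≤ c
  · rw [sublevelGraph_slideEdge_of_le hnew hold hc]
    exact reachable_slideEdge_iff (sublevelGraph_adj.2 ⟨hxy, hc⟩)
      (sublevelGraph_adj.2 ⟨hyz, hw.trans hc⟩) hxz
  · rw [sublevelGraph_slideEdge_of_not_le hnew hold hc]

lemma pathMax_slideEdge {w w' : Sym2 V → ℝ} (hxy : G.Adj x y) (hyz : G.Adj y z) (hxz : x ≠ z)
    (hw : w s(y, z) ≤ w s(x, y)) (hnew : w' s(x, z) = w s(x, y))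
    (hold : ∀ e ∈ G.edgeSet, w' e = w e) (u v : V) :
    pathMax (slideEdge G x y z) w' u v = pathMax G w u v :=
  pathMax_eq_of_forall_reachable_sublevelGraph_iff fun _ =>
    reachable_sublevelGraph_slideEdge_iff hxy hyz hxz hw hnew hold

end SlideEdge

theorem tw_transformation_tree_general {V : Type*} {T : SimpleGraph V} (hT : T.IsAcyclic)
    {w w' : Sym2 V → ℝ} {x y z : V} (hxy : T.Adj x y) (hyz : T.Adj y z) (hxz : x ≠ z)
    (hw : w s(y, z) ≤ w s(x, y)) (hnew : w' s(x, z) = w s(x, y))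
    (hold : ∀ e, e ≠ s(x, z) → w' e = w e) :
    (∀ u v, (slideEdge T x y z).Reachable u v ↔ T.Reachable u v) ∧
    (slideEdge T x y z).IsAcyclic ∧
    ∀ u v, T.Reachable u v → pathMax (slideEdge T x y z) w' u v = pathMax T w u v := by
  have hnadj : ¬T.Adj x z := not_adj_of_isAcyclic_of_adj_adj hT hxy hyz
  have hold' : ∀ e ∈ T.edgeSet, w' e = w e := fun e he =>
    hold e (ne_of_mem_of_not_mem he hnadj)
  exact ⟨fun _ _ => reachable_slideEdge_iff hxy hyz hxz, isAcyclic_slideEdge hT hxy hyz hxz,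
    fun u v _ => pathMax_slideEdge hxy hyz hxz hw hnew hold' u v⟩

/-- The TW transformation on a tree: if `T` is a tree with `T.Adj x y` and
`T.Adj y z` and `w {x,y} ≥ w {y,z}`, then replacing the edge `{x,y}` by the
edge `{x,z}` (carrying the weight of `{x,y}`) yields again a tree, with the
same path-max queries. -/
theorem tw_transformation_tree {V : Type*} [Fintype V] (T : SimpleGraph V)
    (hTc : T.Connected) (hTa : T.IsAcyclic)
    (w w' : Sym2 V → ℝ) (x y z : V)
    (hxy : x ≠ y) (hyz : y ≠ z) (hxz : x ≠ z)
    (haxy : T.Adj x y) (hayz : T.Adj y z)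
    (hwge : w s(x, y) ≥ w s(y, z))
    (hw'new : w' s(x, z) = w s(x, y))
    (hw'old : ∀ e : Sym2 V, e ≠ s(x, z) → w' e = w e) :
    (SimpleGraph.fromEdgeSet ((T.edgeSet \ {s(x, y)}) ∪ {s(x, z)})).Connected ∧
    (SimpleGraph.fromEdgeSet ((T.edgeSet \ {s(x, y)}) ∪ {s(x, z)})).IsAcyclic ∧
    ∀ u v : V,
      pathMax (SimpleGraph.fromEdgeSet ((T.edgeSet \ {s(x, y)}) ∪ {s(x, z)})) w' u v =
        pathMax T w u v := by
  obtain ⟨hreach, hacyclic, hmax⟩ :=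
    tw_transformation_tree_general hTa haxy hayz hxz hwge hw'new hw'old
  have := hTc.nonempty
  exact ⟨⟨fun u v => (hreach u v).2 (hTc u v)⟩, hacyclic, fun u v => hmax u v (hTc u v)⟩
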